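/- The 4×4 matrix J₂(0) ⊕ J₂(0) has no square root A that is H-selfadjoint with respect to H = Q₂ ⊕ Q₂, where Q₂ = [[0,1],[1,0]]. That is, there is no 4×4 complex matrix A with A² = J₂(0) ⊕ J₂(0) and H·A = Aᴴ·H. -/

import Mathlib

/-!
A square root `A` of `B = J₂(0) ⊕ J₂(0)` commutes with `B`, so each of its 2×2 blocks has the form
`m I + n J₂(0)`. With `M`, `N` the 2×2 matrices of the coefficients `m`, `n`, the equation `A² = B`
says `M² = 0` and `MN + NM = 1`, while `H`-selfadjointness says that `M` and `N` are Hermitian.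
A Hermitian `M` with `M² = 0` vanishes, contradicting `MN + NM = 1`. The first row of `M`,
that is `(A 0 0, A 0 2)`, already suffices: `0 = (M²)₀₀ = |A 0 0|² + |A 0 2|²`, and then the
entry `(0, 1)` of `A²` is `0` rather than `1`.
-/

open Matrix

theorem no_H_selfadjoint_sq_root_J2_plus_J2 :
    ¬ ∃ A : Matrix (Fin 4) (Fin 4) ℂ,
        A ^ 2 = !![0, 1, 0, 0; 0, 0, 0, 0; 0, 0, 0, 1; 0, 0, 0, 0] ∧
        (!![0, 1, 0, 0; 1, 0, 0, 0; 0, 0, 0, 1; 0, 0, 1, 0] : Matrix (Fin 4) (Fin 4) ℂ) * A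
          = Aᴴ * !![0, 1, 0, 0; 1, 0, 0, 0; 0, 0, 0, 1; 0, 0, 1, 0] := by
  rintro ⟨A, hA, hH⟩
  have hcomm : A * A ^ 2 = A ^ 2 * A := (pow_mul_comm' A 2).symm
  rw [hA] at hcomm
  rw [pow_two] at hA
  have h10 : A 1 0 = 0 := by
    simpa [Matrix.mul_apply, Fin.sum_univ_four] using (congrFun₂ hcomm 0 0).symm
  have h30 : A 3 0 = 0 := by
    simpa [Matrix.mul_apply, Fin.sum_univ_four] using (congrFun₂ hcomm 2 0).symm
  have h11 : A 1 1 = A 0 0 := by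
    simpa [Matrix.mul_apply, Fin.sum_univ_four] using (congrFun₂ hcomm 0 1).symm
  have h31 : A 3 1 = A 2 0 := by
    simpa [Matrix.mul_apply, Fin.sum_univ_four] using (congrFun₂ hcomm 2 1).symm
  have hs00 : A 0 0 = star (A 1 1) := by
    simpa [Matrix.mul_apply, Fin.sum_univ_four] using congrFun₂ hH 1 0
  have hs02 : A 0 2 = star (A 3 1) := by
    simpa [Matrix.mul_apply, Fin.sum_univ_four] using congrFun₂ hH 1 2
  have hsq : A 0 0 * A 0 0 + A 0 2 * A 2 0 = 0 := by
    simpa [Matrix.mul_apply, Fin.sum_univ_four, h10, h30] using congrFun₂ hA 0 0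
  have hone : A 0 0 * A 0 1 + A 0 1 * A 0 0 + A 0 2 * A 2 1 + A 0 3 * A 2 0 = 1 := by
    simpa [Matrix.mul_apply, Fin.sum_univ_four, h11, h31] using congrFun₂ hA 0 1
  rw [h11] at hs00
  rw [h31] at hs02
  have hnorm : Complex.normSq (A 0 0) + Complex.normSq (A 2 0) = 0 := by
    have h : A 0 0 * star (A 0 0) + A 2 0 * star (A 2 0) = 0 := by
      rw [← hs00, ← hs02, mul_comm (A 2 0)]
      exact hsq
    simp only [Complex.star_def, Complex.mul_conj] at h
    exact_mod_cast h
  have h00 : A 0 0 = 0 := Complex.normSq_eq_zero.mp <| by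
    linarith [Complex.normSq_nonneg (A 0 0), Complex.normSq_nonneg (A 2 0)]
  have h20 : A 2 0 = 0 := Complex.normSq_eq_zero.mp <| by
    linarith [Complex.normSq_nonneg (A 0 0), Complex.normSq_nonneg (A 2 0)]
  simp [hs02, h00, h20] at hone
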